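/- Let C be the linear map on ℂ^64 defined by: C e_21 = e_42 and C e_42 = e_21; C e_a = (−e_a + 2 e_b + 2 e_c)/3 for every cyclic rotation (a,b,c) of the triple (9, 18, 36) and of the triple (27, 45, 54); and C e_s = e_s for all remaining s ∈ {0,…,63}. The real vector space of 64×64 Hermitian complex matrices O satisfying C·O = O·C has real dimension exactly 3506 = 4^6 − 590; equivalently, the FHP model with the 2-, 3- and 4-body zero-momentum collisions has exactly 3506 linearly independent quantum invariants. -/

import Mathlib

open Matrix

/-- The Pauli-`Z` operator on qubit `i` of a 6-qubit register: the `64 × 64` diagonal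
matrix whose `(s,s)` entry is `(−1)^{n_i(s)}`, where `n_i(s)` is the `i`-th binary
digit of `s`. -/
def Zq (i : ℕ) : Matrix (Fin 64) (Fin 64) ℂ :=
  Matrix.diagonal fun s => (-1 : ℂ) ^ (s.val / 2 ^ i % 2)

/-- The FHP mass observable `M = Z₀ + Z₁ + Z₂ + Z₃ + Z₄ + Z₅`. -/
def massM : Matrix (Fin 64) (Fin 64) ℂ := Zq 0 + Zq 1 + Zq 2 + Zq 3 + Zq 4 + Zq 5

/-- The FHP `x`-momentum observable `P_x = Z₀ − Z₃ + (1/2)(Z₁ + Z₅ − Z₂ − Z₄)`. -/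
noncomputable def momPx : Matrix (Fin 64) (Fin 64) ℂ :=
  Zq 0 - Zq 3 + (1 / 2 : ℂ) • (Zq 1 + Zq 5 - Zq 2 - Zq 4)

/-- The FHP `y`-momentum observable `P_y = (√3/2)(Z₁ + Z₂ − Z₄ − Z₅)`. -/
noncomputable def momPy : Matrix (Fin 64) (Fin 64) ℂ :=
  ((Real.sqrt 3 / 2 : ℝ) : ℂ) • (Zq 1 + Zq 2 - Zq 4 - Zq 5)

/-- The FHP 3-body collision operator: the `64 × 64` permutation matrix with
`C₃ e₂₁ = e₄₂`, `C₃ e₄₂ = e₂₁` and `C₃ e_s = e_s` for `s ∉ {21, 42}`. -/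
def collC3 : Matrix (Fin 64) (Fin 64) ℂ :=
  Matrix.of fun i j => if i = Equiv.swap (21 : Fin 64) 42 j then 1 else 0

/-- The column of the unitary mixing `e_a ↦ (−e_a + 2 e_b + 2 e_c)/3`. -/
noncomputable def mixCol (i a b c : Fin 64) : ℂ :=
  (1 / 3 : ℂ) * (-(if i = a then 1 else 0) + 2 * (if i = b then 1 else 0)
    + 2 * (if i = c then 1 else 0))

/-- The unitary FHP 0-momentum collision operator `C`: it exchanges `e₂₁ ↔ e₄₂`
(3-body collision), sends `e_a` to `(−e_a + 2 e_b + 2 e_c)/3` for every cyclic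
rotation `(a,b,c)` of `(9,18,36)` and of `(27,45,54)` (unitary realization of the
non-deterministic 2- and 4-body collisions), and fixes all other basis states. -/
noncomputable def collFHP : Matrix (Fin 64) (Fin 64) ℂ :=
  Matrix.of fun i j =>
    if j = 21 then (if i = 42 then 1 else 0)
    else if j = 42 then (if i = 21 then 1 else 0)
    else if j = 9 then mixCol i 9 18 36
    else if j = 18 then mixCol i 18 36 9
    else if j = 36 then mixCol i 36 9 18
    else if j = 27 then mixCol i 27 45 54
    else if j = 45 then mixCol i 45 54 27
    else if j = 54 then mixCol i 54 27 45
    else (if i = j then 1 else 0)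

/-- The real vector space of Hermitian `n × n` complex matrices commuting with `C`,
i.e. the quantum invariants of the collision operator `C`. -/
noncomputable def quantumInvariants {n : Type*} [Fintype n] (C : Matrix n n ℂ) :
    Submodule ℝ (Matrix n n ℂ) where
  carrier := {O | O.IsHermitian ∧ C * O = O * C}
  add_mem' := fun ha hb =>
    ⟨ha.1.add hb.1, by rw [Matrix.mul_add, Matrix.add_mul, ha.2, hb.2]⟩
  zero_mem' := ⟨Matrix.isHermitian_zero, by rw [Matrix.mul_zero, Matrix.zero_mul]⟩
  smul_mem' := fun r O hO =>
    ⟨by rw [Matrix.IsHermitian, Matrix.conjTranspose_smul, star_trivial, hO.1],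
     by rw [Matrix.mul_smul, Matrix.smul_mul, hO.2]⟩

/-!
Let `Π` average a vector over each set of configurations that collide with one another, a
configuration taking part in no collision being alone in its set. A two-element swap and the mixing
`e_a ↦ (−e_a + 2 e_b + 2 e_c)/3` are both reflections in the uniform vector of their set, and so is
the identity on a singleton, so `C = 2Π − 1` and `C` commutes with the same matrices as `Π`.
The commutant of an idempotent `P` is the image of the projection `O ↦ POP + (1 − P)O(1 − P)`, whose
trace `(tr P)² + (tr (1 − P))²` is therefore its dimension. Here `tr Π = 59` is the number of sets,
giving `59² + 5² = 3506` over `ℂ`; the commutant is closed under adjoints, hence is the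
complexification of its Hermitian part, which has the same dimension over `ℝ`.
-/

section SelfAdjoint

open ComplexStarModule

variable {A : Type*} [AddCommGroup A] [Module ℂ A] [StarAddMonoid A] [StarModule ℂ A]

/-- The Cartesian decomposition `a = ℜ a + i ℑ a`, exhibiting a complex star module as the
complexification of its self-adjoint part. -/
noncomputable def cartesianDecomposition : A ≃ₗ[ℝ] selfAdjoint A × selfAdjoint A :=
  LinearEquiv.ofBijective ((realPart (A := A)).prod imaginaryPart) <| by
    refine ⟨fun a b h => ?_, fun ⟨x, y⟩ => ⟨x + Complex.I • (y : A), ?_⟩⟩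
    · obtain ⟨hre, him⟩ := Prod.ext_iff.mp h
      exact ComplexStarModule.ext hre him
    · ext <;> simp

theorem finrank_selfAdjoint [FiniteDimensional ℂ A] :
    Module.finrank ℝ (selfAdjoint A) = Module.finrank ℂ A := by
  have : FiniteDimensional ℝ A := FiniteDimensional.complexToReal A
  have : FiniteDimensional ℝ (selfAdjoint A) :=
    FiniteDimensional.finiteDimensional_submodule (selfAdjoint.submodule ℝ A)
  have h := (cartesianDecomposition (A := A)).finrank_eq
  rw [Module.finrank_prod, finrank_real_of_complex] at h
  lia

end SelfAdjoint

section Commutant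

variable {R A : Type*} [CommRing R] [Ring A] [Algebra R A]

variable (R) in
/-- The map `x ↦ p x p + (1 - p) x (1 - p)` discarding the off-diagonal blocks of the Peirce
decomposition with respect to `p`. -/
def peirceDiagonal (p : A) : A →ₗ[R] A :=
  LinearMap.mulLeftRight R (p, p) + LinearMap.mulLeftRight R (1 - p, 1 - p)

theorem peirceDiagonal_apply (p x : A) :
    peirceDiagonal R p x = p * x * p + (1 - p) * x * (1 - p) := by
  simp [peirceDiagonal]

theorem isProj_peirceDiagonal {p : A} (hp : IsIdempotentElem p) :
    LinearMap.IsProj (Subalgebra.centralizer R {p}).toSubmodule (peirceDiagonal R p) where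
  map_mem x := by
    have hleft : p * peirceDiagonal R p x = p * x * p := by
      rw [peirceDiagonal_apply, mul_add, ← mul_assoc, ← mul_assoc, hp.eq, ← mul_assoc, ← mul_assoc,
        hp.mul_one_sub_self, zero_mul, zero_mul, add_zero]
    have hright : peirceDiagonal R p x * p = p * x * p := by
      rw [peirceDiagonal_apply, add_mul, mul_assoc _ p p, hp.eq, mul_assoc _ (1 - p) p,
        hp.one_sub_mul_self, mul_zero, add_zero]
    simp [Subalgebra.mem_centralizer_iff, hleft, hright]
  map_id x hx := by
    have hcomm : p * x = x * p := by simpa [Subalgebra.mem_centralizer_iff] using hx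
    have hcomm' : (1 - p) * x = x * (1 - p) := by rw [sub_mul, mul_sub, hcomm, one_mul, mul_one]
    rw [peirceDiagonal_apply, hcomm, hcomm', mul_assoc, mul_assoc, hp.eq, hp.one_sub.eq, ← mul_add,
      add_sub_cancel, mul_one]

variable {n : Type*} [Fintype n]

theorem trace_mulLeftRight (B C : Matrix n n R) :
    LinearMap.trace R _ (LinearMap.mulLeftRight R (B, C)) = B.trace * C.trace := by
  classical
  rw [LinearMap.trace_eq_matrix_trace R (Matrix.stdBasis R n n), Matrix.trace, Matrix.trace,
    Matrix.trace, Finset.sum_mul_sum, Fintype.sum_prod_type]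
  refine Finset.sum_congr rfl fun i _ => Finset.sum_congr rfl fun j _ => ?_
  have hrepr (M : Matrix n n R) : (Matrix.stdBasis R n n).repr M (i, j) = M i j := rfl
  rw [Matrix.diag, LinearMap.toMatrix_apply, hrepr, Matrix.stdBasis_eq_single]
  simp [Matrix.mul_apply, Matrix.single_apply, ite_and]

theorem cast_finrank_centralizer [DecidableEq n] {K : Type*} [Field K]
    {P : Matrix n n K} (hP : IsIdempotentElem P) :
    (Module.finrank K (Subalgebra.centralizer K {P}) : K) = P.trace ^ 2 + (1 - P).trace ^ 2 := by
  rw [sq, sq, ← trace_mulLeftRight, ← trace_mulLeftRight, ← map_add]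
  exact (isProj_peirceDiagonal hP).trace.symm

end Commutant

section QuantumInvariants

variable {n : Type*} [Fintype n] [DecidableEq n]

theorem quantumInvariants_smul_sub_one (C : Matrix n n ℂ) {a : ℂ} (ha : a ≠ 0) :
    quantumInvariants (a • C - 1) = quantumInvariants C := by
  ext O
  refine and_congr_right fun _ => ?_
  rw [Matrix.sub_mul, Matrix.mul_sub, Matrix.one_mul, Matrix.mul_one, sub_left_inj,
    Matrix.smul_mul, Matrix.mul_smul, (smul_right_injective _ ha).eq_iff]

theorem mem_centralizer_of_mem_quantumInvariants {C O : Matrix n n ℂ}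
    (hO : O ∈ quantumInvariants C) : O ∈ StarSubalgebra.centralizer ℂ {C} := by
  obtain ⟨hherm, hcomm⟩ := hO
  have hstar : star C * O = O * star C := by
    simpa [Matrix.star_eq_conjTranspose, hherm.eq] using (congrArg star hcomm).symm
  simpa [StarSubalgebra.mem_centralizer_iff] using And.intro hcomm hstar

/-- Quantum invariants of `C` as the self-adjoint part of a star algebra, which makes the general
theory of complex star modules available. -/
noncomputable def quantumInvariantsEquiv (C : Matrix n n ℂ) :
    quantumInvariants C ≃ₗ[ℝ] selfAdjoint (StarSubalgebra.centralizer ℂ {C}) where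
  toFun O := ⟨⟨O, mem_centralizer_of_mem_quantumInvariants O.2⟩, Subtype.ext O.2.1⟩
  invFun O := ⟨O, congrArg Subtype.val O.2,
    (StarSubalgebra.mem_centralizer_iff _ |>.mp O.1.2 C rfl).1⟩
  map_add' _ _ := rfl
  map_smul' _ _ := rfl
  left_inv _ := rfl
  right_inv _ := rfl

theorem finrank_quantumInvariants (C : Matrix n n ℂ) :
    Module.finrank ℝ (quantumInvariants C) =
      Module.finrank ℂ (StarSubalgebra.centralizer ℂ {C}) := by
  have : FiniteDimensional ℂ (StarSubalgebra.centralizer ℂ {C}) :=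
    FiniteDimensional.finiteDimensional_submodule
      (StarSubalgebra.centralizer ℂ {C}).toSubalgebra.toSubmodule
  exact (quantumInvariantsEquiv C).finrank_eq.trans finrank_selfAdjoint

theorem finrank_quantumInvariants_of_isHermitian {C : Matrix n n ℂ} (hC : C.IsHermitian) :
    Module.finrank ℝ (quantumInvariants C) = Module.finrank ℂ (Subalgebra.centralizer ℂ {C}) := by
  have hunion : ({C} ∪ star {C} : Set (Matrix n n ℂ)) = {C} := by
    rw [Set.star_singleton, Matrix.star_eq_conjTranspose, hC.eq, Set.union_self]
  calc Module.finrank ℝ (quantumInvariants C)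
      = Module.finrank ℂ (StarSubalgebra.centralizer ℂ {C}) := finrank_quantumInvariants C
    _ = Module.finrank ℂ (Subalgebra.centralizer ℂ ({C} ∪ star {C})) := rfl
    _ = Module.finrank ℂ (Subalgebra.centralizer ℂ {C}) := by rw [hunion]

end QuantumInvariants

section FiberAverage

open Finset

variable {n κ : Type*} [Fintype n] [DecidableEq κ] {K : Type*} [Field K]

variable (K) in
/-- The matrix averaging a vector over the fibers of `f`, i.e. the orthogonal projection onto the
functions that factor through `f`. Fiber sizes are inverted in `K`, so this is only meaningful in
characteristic zero. -/
def fiberAverage (f : n → κ) : Matrix n n K :=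
  Matrix.of fun i j => if f i = f j then (#{k | f k = f j} : K)⁻¹ else 0

theorem isHermitian_fiberAverage [StarRing K] (f : n → κ) : (fiberAverage K f).IsHermitian := by
  ext i j
  by_cases h : f i = f j <;> simp [fiberAverage, h, eq_comm]

variable [CharZero K]

theorem card_fiber_ne_zero (f : n → κ) (i : n) : (#{k | f k = f i} : K) ≠ 0 :=
  Nat.cast_ne_zero.mpr <| card_ne_zero_of_mem (mem_filter_univ i |>.mpr rfl)

theorem isIdempotentElem_fiberAverage (f : n → κ) : IsIdempotentElem (fiberAverage K f) := by
  ext i j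
  have hterm (k : n) : fiberAverage K f i k * fiberAverage K f k j =
      if f k = f j then fiberAverage K f i j * (#{k | f k = f j} : K)⁻¹ else 0 := by
    by_cases h : f k = f j <;> simp [fiberAverage, h]
  have hcard : (#{k | f k = f j} : K) ≠ 0 := card_fiber_ne_zero f j
  rw [Matrix.mul_apply, sum_congr rfl fun k _ => hterm k, ← sum_filter, sum_const, nsmul_eq_mul,
    mul_left_comm, mul_inv_cancel₀ hcard, mul_one]

theorem trace_fiberAverage (f : n → κ) : (fiberAverage K f).trace = #(univ.image f) := by
  have hfiber (i : n) : (1 : K) = ∑ j with f j = f i, (fiberAverage K f).diag j := by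
    have hdiag (j : n) (hj : j ∈ ({k | f k = f i} : Finset n)) :
        (fiberAverage K f).diag j = (#{k | f k = f i} : K)⁻¹ := by
      simp [fiberAverage, mem_filter_univ j |>.mp hj]
    rw [sum_congr rfl hdiag, sum_const, nsmul_eq_mul, mul_inv_cancel₀ (card_fiber_ne_zero f i)]
  rw [card_eq_sum_ones, Nat.cast_sum, Nat.cast_one, Matrix.trace, sum_image' _ fun i _ => hfiber i]

end FiberAverage

section FiberReflection

open Finset

variable {n κ : Type*} [Fintype n] [DecidableEq n] [DecidableEq κ] {K : Type*} [Field K]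

variable (K) in
/-- The reflection that fixes the functions factoring through `f` and negates their orthogonal
complement. -/
def fiberReflection (f : n → κ) : Matrix n n K :=
  (2 : K) • fiberAverage K f - 1

theorem fiberReflection_apply_of_fiber {f : n → κ} {j : n} {s : Finset n}
    (hs : ∀ i, f i = f j ↔ i ∈ s) (i : n) :
    fiberReflection K f i j = (if i ∈ s then 2 / (#s : K) else 0) - if i = j then 1 else 0 := by
  simp [fiberReflection, fiberAverage, hs, Matrix.one_apply, div_eq_mul_inv]

theorem finrank_quantumInvariants_fiberReflection (f : n → κ) :
    Module.finrank ℝ (quantumInvariants (fiberReflection ℂ f)) =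
      #(univ.image f) ^ 2 + (Fintype.card n - #(univ.image f)) ^ 2 := by
  have hle : #(univ.image f) ≤ Fintype.card n := card_image_le
  rw [fiberReflection, quantumInvariants_smul_sub_one _ two_ne_zero,
    finrank_quantumInvariants_of_isHermitian (isHermitian_fiberAverage f), ← Nat.cast_inj (R := ℂ),
    cast_finrank_centralizer (isIdempotentElem_fiberAverage f), Matrix.trace_sub, Matrix.trace_one,
    trace_fiberAverage]
  push_cast [hle]
  rfl

theorem fiberReflection_apply_of_singleton_fiber {f : n → κ} {a : n}
    (h : ∀ i, f i = f a ↔ i ∈ ({a} : Finset n)) (i : n) :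
    fiberReflection K f i a = (1 : Matrix n n K) i a := by
  rw [fiberReflection_apply_of_fiber h, card_singleton, Matrix.one_apply]
  simp only [mem_singleton]
  split_ifs <;> norm_num

theorem fiberReflection_apply_of_pair_fiber [NeZero (2 : K)] {f : n → κ} {a b : n} (hab : a ≠ b)
    (h : ∀ i, f i = f a ↔ i ∈ ({a, b} : Finset n)) (i : n) :
    fiberReflection K f i a = (1 : Matrix n n K) i b := by
  have htwo : (2 : K) ≠ 0 := two_ne_zero
  rw [fiberReflection_apply_of_fiber h, card_pair hab, Matrix.one_apply]
  simp only [mem_insert, mem_singleton]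
  split_ifs <;> simp_all

theorem fiberReflection_apply_of_triple_fiber {f : Fin 64 → κ} {a b c : Fin 64}
    (hab : a ≠ b) (hac : a ≠ c) (hbc : b ≠ c)
    (h : ∀ i, f i = f a ↔ i ∈ ({a, b, c} : Finset (Fin 64))) (i : Fin 64) :
    fiberReflection ℂ f i a = mixCol i a b c := by
  have hcard : #({a, b, c} : Finset (Fin 64)) = 3 :=
    card_eq_three.mpr ⟨a, b, c, hab, hac, hbc, rfl⟩
  rw [fiberReflection_apply_of_fiber h, hcard, mixCol]
  simp only [mem_insert, mem_singleton]
  split_ifs <;> grind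

end FiberReflection

section FHP

/-- The set of configurations that `s` collides with, labelled by its smallest element; a
configuration taking part in no collision is its own label. -/
def collisionClass (s : Fin 64) : Fin 64 :=
  if s ∈ ({9, 18, 36} : Finset (Fin 64)) then 9
  else if s ∈ ({27, 45, 54} : Finset (Fin 64)) then 27
  else if s ∈ ({21, 42} : Finset (Fin 64)) then 21
  else s

theorem collFHP_eq_fiberReflection : collFHP = fiberReflection ℂ collisionClass := by
  ext i j
  simp only [collFHP, Matrix.of_apply, ← Matrix.one_apply]
  symm
  split_ifs
  case neg => exact fiberReflection_apply_of_singleton_fiber (by decide +revert) i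
  all_goals subst j
  any_goals refine fiberReflection_apply_of_triple_fiber ?_ ?_ ?_ ?_ i <;> decide
  all_goals refine fiberReflection_apply_of_pair_fiber ?_ ?_ i <;> decide

end FHP

/-- **Counting quantum invariants of FHP with the 2-, 3- and 4-body zero-momentum
collisions:** the real vector space of Hermitian `64 × 64` matrices `O` with
`C·O = O·C` has real dimension exactly `3506 = 4⁶ − 590`. -/
theorem fhp_B234_quantum_invariants_dim :
    Module.finrank ℝ (quantumInvariants collFHP) = 3506 ∧ 3506 = 4 ^ 6 - 590 := by
  have hclasses : (Finset.univ.image collisionClass).card = 59 := by decide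
  rw [collFHP_eq_fiberReflection, finrank_quantumInvariants_fiberReflection, hclasses,
    Fintype.card_fin]
  norm_num
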